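/- Let α, β be real numbers, let μ be a complex number with Im μ ≠ 0, and set A = [[α, −β], [1, 0]] and H = [[μ, μ̄], [1, 1]] as 2×2 complex matrices (H is invertible since Im μ ≠ 0). Then, with ‖M‖ denoting the operator norm on ℂ² induced by the maximum norm (i.e., the maximum over rows of the sum of the absolute values of the entries in that row), one has ‖H⁻¹AH‖ = ( |μ² − αμ + β| + | |μ|² − αμ + β | ) / |μ − μ̄|. -/

import Mathlib

/-- The elliptic-type matrix norm identity: for real `α, β` and complex `μ` with
`Im μ ≠ 0`, letting `A = [[α, -β],[1, 0]]`, `H = [[μ, μ̄],[1, 1]]` (invertible since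
`Im μ ≠ 0`), the operator norm of `H⁻¹AH` induced by the maximum norm on `ℂ²`
(i.e. the maximum over rows of the sum of absolute values of the entries) equals
`(|μ² - αμ + β| + ||μ|² - αμ + β|) / |μ - μ̄|`. -/
theorem elliptic_norm_formula (α β : ℝ) (μ : ℂ) (hμ : μ.im ≠ 0) :
    (fun B : Matrix (Fin 2) (Fin 2) ℂ =>
        max (‖B 0 0‖ + ‖B 0 1‖)
            (‖B 1 0‖ + ‖B 1 1‖))
      ((!![μ, (starRingEnd ℂ) μ; 1, 1])⁻¹ * !![(α : ℂ), -(β : ℂ); 1, 0]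
        * !![μ, (starRingEnd ℂ) μ; 1, 1])
    = (‖μ^2 - (α : ℂ)*μ + (β : ℂ)‖
        + ‖((‖μ‖^2 : ℝ) : ℂ) - (α : ℂ)*μ + (β : ℂ)‖)
      / ‖μ - (starRingEnd ℂ) μ‖ := by
  have hd : μ - (starRingEnd ℂ) μ ≠ 0 := by
    intro h
    have h2 := congrArg Complex.im h
    simp at h2
    exact hμ h2
  have hn : (((‖μ‖^2 : ℝ)) : ℂ) = μ * (starRingEnd ℂ) μ := by
    rw [Complex.mul_conj, Complex.normSq_eq_norm_sq]
  have h1 : ‖((starRingEnd ℂ) μ)^2 - (α : ℂ)*(starRingEnd ℂ) μ + (β : ℂ)‖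
      = ‖μ^2 - (α : ℂ)*μ + (β : ℂ)‖ := by
    rw [← Complex.norm_conj]
    simp
  have h2 : ‖μ * (starRingEnd ℂ) μ - (α : ℂ)*(starRingEnd ℂ) μ + (β : ℂ)‖
      = ‖μ * (starRingEnd ℂ) μ - (α : ℂ)*μ + (β : ℂ)‖ := by
    rw [← Complex.norm_conj]
    simp [mul_comm]
  rw [hn]
  generalize (starRingEnd ℂ) μ = ν at *
  have hinv : (!![μ, ν; 1, 1])⁻¹
      = !![1 / (μ - ν), -ν / (μ - ν); -1 / (μ - ν), μ / (μ - ν)] := by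
    apply Matrix.inv_eq_left_inv
    ext i j
    fin_cases i <;> fin_cases j <;> simp [Matrix.mul_apply, Fin.sum_univ_two] <;>
      field_simp <;> ring
  have hB : (!![μ, ν; 1, 1])⁻¹ * !![(α : ℂ), -(β : ℂ); 1, 0] * !![μ, ν; 1, 1]
      = !![-(μ * ν - α * μ + β) / (μ - ν), -(ν^2 - α * ν + β) / (μ - ν);
          (μ^2 - α * μ + β) / (μ - ν), (μ * ν - α * ν + β) / (μ - ν)] := by
    rw [hinv]
    ext i j
    fin_cases i <;> fin_cases j <;> simp [Matrix.mul_apply, Fin.sum_univ_two] <;>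
      field_simp <;> ring
  rw [hB]
  simp only [Matrix.of_apply, Matrix.cons_val', Matrix.cons_val_zero, Matrix.cons_val_one,
    Matrix.cons_val_fin_one, norm_div, norm_neg, h1, h2]
  rw [add_comm (‖μ * ν - α * μ + β‖ / _), max_self, add_div]
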